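/- arXiv:math/9903186 — 2 statements merged into one kernel-verified Lean document; each statement's English description precedes it below -/
import Mathlib

section
/- Let M : ℂ₊ → B(H) be a Herglotz operator and suppose M(z₀)⁻¹ ∈ B(H) for some z₀ ∈ ℂ₊ (and hence, M(z)⁻¹ ∈ B(H) for all z ∈ ℂ₊). Then the map z ↦ log(M(z)) is again a Herglotz operator on ℂ₊, and moreover 0 ≤ Im(log(M(z))) ≤ π I_H for all z ∈ ℂ₊. -/
open Complex Filter MeasureTheory TopologicalSpace ContinuousLinearMap
open scoped InnerProductSpace Topology

noncomputable section

namespace SpectralShift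

variable {H : Type*} [NormedAddCommGroup H] [InnerProductSpace ℂ H] [CompleteSpace H]

/-- The imaginary part `(T - T*)/(2i)` of a bounded operator. -/
def imPart (T : H →L[ℂ] H) : H →L[ℂ] H :=
  ((2 * Complex.I)⁻¹ : ℂ) • (T - ContinuousLinearMap.adjoint T)

/-- An operator-valued Herglotz function: analytic on the open upper half-plane with
nonnegative imaginary part there. -/
def IsHerglotz (M : ℂ → H →L[ℂ] H) : Prop :=
  DifferentiableOn ℂ M {z : ℂ | 0 < z.im} ∧ ∀ z : ℂ, 0 < z.im → (imPart (M z)).IsPositive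

/-- The integrand `(T + iλ)⁻¹ - (1 + iλ)⁻¹ I` in the integral representation of `log T`. -/
def logIntegrand (T : H →L[ℂ] H) (t : ℝ) : H →L[ℂ] H :=
  Ring.inverse (T + ((t : ℂ) * Complex.I) • (1 : H →L[ℂ] H)) -
    (((1 : ℂ) + (t : ℂ) * Complex.I)⁻¹) • (1 : H →L[ℂ] H)

/-- `log T = -i ∫₀^∞ ((T + iλ)⁻¹ - (1 + iλ)⁻¹ I) dλ` as a norm-convergent improper
Riemann integral, for a dissipative boundedly invertible `T`. -/
def opLog (T : H →L[ℂ] H) : H →L[ℂ] H :=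
  limUnder atTop (fun R : ℝ => (-Complex.I) • ∫ t in (0:ℝ)..R, logIntegrand T t)

/-- The logarithm `log S = (log S*)*` of an operator `S` with `-S` dissipative. -/
def opLogAnti (T : H →L[ℂ] H) : H →L[ℂ] H :=
  ContinuousLinearMap.adjoint (opLog (ContinuousLinearMap.adjoint T))

/-- The logarithm of a Herglotz-type operator family on `ℂ ∖ ℝ`, using `log T` in the
upper half-plane and the convention `log S = (log S*)*` in the lower half-plane. -/
def logHerg (Φ : ℂ → H →L[ℂ] H) (z : ℂ) : H →L[ℂ] H :=
  if 0 < z.im then opLog (Φ z) else opLogAnti (Φ z)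

/-- The logarithm of an anti-Herglotz-type operator family on `ℂ ∖ ℝ` (nonpositive
imaginary part in the upper half-plane). -/
def logAntiHerg (Φ : ℂ → H →L[ℂ] H) (z : ℂ) : H →L[ℂ] H :=
  if 0 < z.im then opLogAnti (Φ z) else opLog (Φ z)

/-- Trace class: absolute summability of the diagonal in every Hilbert basis. -/
def IsTraceClass (T : H →L[ℂ] H) : Prop :=
  ∀ (w : Set H) (b : HilbertBasis w ℂ H), Summable fun i => ‖⟪(b i : H), T (b i)⟫_ℂ‖

/-- The trace, computed in a fixed Hilbert basis (basis-independent for trace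
class operators). -/
def trH (T : H →L[ℂ] H) : ℂ :=
  ∑' i, ⟪((exists_hilbertBasis ℂ H).choose_spec.choose i : H),
    T ((exists_hilbertBasis ℂ H).choose_spec.choose i)⟫_ℂ

/-- The trace norm, via duality with bounded operators (the correct value for trace
class operators). -/
def traceNorm (T : H →L[ℂ] H) : ℝ :=
  ⨆ B : {B : H →L[ℂ] H // ‖B‖ ≤ 1}, ‖trH (T * (B : H →L[ℂ] H))‖

/-- Hilbert-Schmidt operators. -/
def IsHilbertSchmidt (K : H →L[ℂ] H) : Prop :=
  ∀ (w : Set H) (b : HilbertBasis w ℂ H), Summable fun i => ‖K (b i)‖ ^ 2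

/-- A (possibly unbounded) self-adjoint operator in `H`: a densely defined symmetric
operator possessing everywhere-defined bounded resolvents at every non-real point. -/
structure SelfAdjointOp (H : Type*) [NormedAddCommGroup H] [InnerProductSpace ℂ H]
    [CompleteSpace H] where
  dom : Submodule ℂ H
  dense_dom : Dense (dom : Set H)
  op : dom →ₗ[ℂ] H
  symmetric : ∀ x y : dom, ⟪op x, (y : H)⟫_ℂ = ⟪(x : H), op y⟫_ℂ
  resolvent : ℂ → H →L[ℂ] H
  resolvent_mem : ∀ {z : ℂ}, z.im ≠ 0 → ∀ x : H, resolvent z x ∈ dom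
  op_resolvent : ∀ {z : ℂ} (hz : z.im ≠ 0) (x : H),
    op ⟨resolvent z x, resolvent_mem hz x⟩ - z • resolvent z x = x
  resolvent_op : ∀ {z : ℂ} (hz : z.im ≠ 0) (x : dom),
    resolvent z (op x - z • (x : H)) = x

/-- `B = A + V` for a bounded operator `V` (with `dom B = dom A`). -/
def IsSumOf (B A : SelfAdjointOp H) (V : H →L[ℂ] H) : Prop :=
  B.dom = A.dom ∧ ∀ (x : H) (hxB : x ∈ B.dom) (hxA : x ∈ A.dom),
    B.op ⟨x, hxB⟩ = A.op ⟨x, hxA⟩ + V x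

/-- `R` is the (bounded, everywhere defined) resolvent `(A - z)⁻¹` of `A` at `z`. -/
def SelfAdjointOp.IsResolventAt (A : SelfAdjointOp H) (z : ℂ) (R : H →L[ℂ] H) : Prop :=
  (∀ x : H, R x ∈ A.dom) ∧
  (∀ (x : H) (hx : R x ∈ A.dom), A.op ⟨R x, hx⟩ - z • R x = x) ∧
  (∀ x : A.dom, R (A.op x - z • (x : H)) = x)

/-- `E` is the projection-valued spectral measure of the self-adjoint operator `A`. -/
def IsSpectralMeasure (A : SelfAdjointOp H) (E : Set ℝ → H →L[ℂ] H) : Prop :=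
  (∀ B : Set ℝ, MeasurableSet B → IsSelfAdjoint (E B)) ∧
  (∀ B C : Set ℝ, MeasurableSet B → MeasurableSet C → E B * E C = E (B ∩ C)) ∧
  (E Set.univ = 1) ∧
  (∀ (f : ℕ → Set ℝ), (∀ n, MeasurableSet (f n)) → Pairwise (Function.onFun Disjoint f) →
    ∀ x : H, HasSum (fun n => E (f n) x) (E (⋃ n, f n) x)) ∧
  ∃ μ : H → Measure ℝ,
    (∀ (f : H) (B : Set ℝ), MeasurableSet B → μ f B = ENNReal.ofReal (⟪f, E B f⟫_ℂ).re) ∧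
    ∀ (z : ℂ), z.im ≠ 0 → ∀ f : H,
      ⟪f, A.resolvent z f⟫_ℂ = ∫ l : ℝ, ((l : ℂ) - z)⁻¹ ∂(μ f)

/-- Invertibility of `T` restricted to the range of the orthogonal projection `P`
(for `T` commuting with `P`), with inverse `S` supported in `ran P`. -/
def InvertibleOn (T P : H →L[ℂ] H) : Prop :=
  ∃ S : H →L[ℂ] H, S * P = S ∧ P * S = S ∧ S * (T * P) = P ∧ (P * T) * S = P

/-- The spectral projection `J₊ = (I + J)/2` onto `H₊` for a self-adjoint unitary `J`. -/
def Jplus (J : H →L[ℂ] H) : H →L[ℂ] H := ((2 : ℂ)⁻¹) • (1 + J)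

/-- The spectral projection `J₋ = (I - J)/2` onto `H₋` for a self-adjoint unitary `J`. -/
def Jminus (J : H →L[ℂ] H) : H →L[ℂ] H := ((2 : ℂ)⁻¹) • (1 - J)

/-- `Φ₊(z) = I + J₊ K* (H₀ - z)⁻¹ K J₊`, the operator on `H` inducing `Φ₊(z)` on `H₊`
(and the identity on `H₋`). -/
def PhiPlus (H0 : SelfAdjointOp H) (J K : H →L[ℂ] H) (z : ℂ) : H →L[ℂ] H :=
  1 + Jplus J * (ContinuousLinearMap.adjoint K * H0.resolvent z * K) * Jplus J

/-- `Φ̃₋(z) = I - J₋ K* (H₊ - z)⁻¹ K J₋`, the operator on `H` inducing `Φ̃₋(z)` on `H₋`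
(and the identity on `H₊`). -/
def PhiMinusT (Hp : SelfAdjointOp H) (J K : H →L[ℂ] H) (z : ℂ) : H →L[ℂ] H :=
  1 - Jminus J * (ContinuousLinearMap.adjoint K * Hp.resolvent z * K) * Jminus J

set_option linter.unusedSectionVars false
set_option linter.unusedVariables false

/-- Dissipativity via quadratic form. -/
def Diss (T : H →L[ℂ] H) : Prop := ∀ x : H, 0 ≤ (⟪x, T x⟫_ℂ).im

lemma imPart_isSelfAdjoint (T : H →L[ℂ] H) : IsSelfAdjoint (imPart T) := by
  unfold imPart
  rw [isSelfAdjoint_iff, star_smul, star_sub]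
  simp only [star_eq_adjoint, adjoint_adjoint]
  rw [← neg_sub T, smul_neg, ← neg_smul]
  congr 1
  simp

lemma re_imPart (T : H →L[ℂ] H) (x : H) :
    (⟪imPart T x, x⟫_ℂ).re = (⟪x, T x⟫_ℂ).im := by
  unfold imPart
  simp only [smul_apply, sub_apply, inner_smul_left, inner_sub_left, adjoint_inner_left]
  rw [← inner_conj_symm (T x) x]
  generalize ⟪x, T x⟫_ℂ = m
  simp [Complex.mul_re]
  ring

lemma imPart_isPositive_iff (T : H →L[ℂ] H) : (imPart T).IsPositive ↔ Diss T := by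
  rw [isPositive_def']
  simp only [imPart_isSelfAdjoint, true_and, reApplyInnerSelf_apply]
  exact forall_congr' fun x => by
    rw [← re_imPart]; rfl

lemma sub_imPart_isPositive (T : H →L[ℂ] H)
    (h : ∀ x : H, (⟪x, T x⟫_ℂ).im ≤ Real.pi * ‖x‖ ^ 2) :
    (((Real.pi : ℂ) • (1 : H →L[ℂ] H)) - imPart T).IsPositive := by
  rw [isPositive_def']
  constructor
  · refine IsSelfAdjoint.sub ?_ (imPart_isSelfAdjoint T)
    rw [isSelfAdjoint_iff, star_smul, star_one]
    simp
  · intro x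
    rw [reApplyInnerSelf_apply, sub_apply, inner_sub_left, map_sub, sub_nonneg]
    change (⟪imPart T x, x⟫_ℂ).re ≤ (⟪((Real.pi : ℂ) • (1 : H →L[ℂ] H)) x, x⟫_ℂ).re
    rw [re_imPart, smul_apply, one_apply_eq_self, inner_smul_left, inner_self_eq_norm_sq_to_K]
    refine (h x).trans_eq ?_
    rw [Complex.conj_ofReal]
    norm_cast
    exact (Complex.re_ofReal_mul Real.pi ((‖x‖ ^ 2 : ℝ) : ℂ)).symm

lemma Diss.im_add {T : H →L[ℂ] H} (hT : Diss T) (w : ℂ) (x : H) :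
    w.im * ‖x‖ ^ 2 ≤ (⟪x, (T + w • (1 : H →L[ℂ] H)) x⟫_ℂ).im := by
  have := hT x
  simp only [add_apply, smul_apply, one_apply_eq_self, inner_add_right, inner_smul_right,
    inner_self_eq_norm_sq_to_K, Complex.add_im]
  have e : (w * ((‖x‖ : ℝ) : ℂ) ^ 2).im = w.im * ‖x‖ ^ 2 := by
    rw [← Complex.ofReal_pow, Complex.im_mul_ofReal]
  erw [e]
  linarith

lemma lower_of_im {S : H →L[ℂ] H} {c : ℝ}
    (h : ∀ x : H, c * ‖x‖ ^ 2 ≤ (⟪x, S x⟫_ℂ).im) (x : H) : c * ‖x‖ ≤ ‖S x‖ := by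
  have h1 := (h x).trans ((Complex.im_le_norm _).trans (norm_inner_le_norm x (S x)))
  rcases (norm_nonneg x).eq_or_lt with h0 | h0
  · rw [← h0]; simp
  · nlinarith

lemma Diss.isUnit_add {T : H →L[ℂ] H} (hT : Diss T) {w : ℂ} (hw : 0 < w.im) :
    IsUnit (T + w • (1 : H →L[ℂ] H)) := by
  refine isUnit_of_forall_le_norm_inner_map _ (c := ⟨w.im, hw.le⟩) hw fun x => ?_
  rw [norm_inner_symm]
  have := (hT.im_add w x).trans (Complex.im_le_norm _)
  rw [mul_comm]
  exact this

lemma norm_inverse_le {S : H →L[ℂ] H} (hS : IsUnit S) {c : ℝ} (hc : 0 < c)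
    (h : ∀ x : H, c * ‖x‖ ≤ ‖S x‖) : ‖Ring.inverse S‖ ≤ c⁻¹ := by
  refine opNorm_le_bound _ (by positivity) fun x => ?_
  have h1 := h (Ring.inverse S x)
  have h2 : S (Ring.inverse S x) = x := by
    have := Ring.mul_inverse_cancel S hS
    exact congrArg (fun A : H →L[ℂ] H => A x) this
  rw [h2] at h1
  rw [inv_mul_eq_div, le_div_iff₀ hc]
  linarith

lemma im_inverse_le {S : H →L[ℂ] H} (hS : IsUnit S) {c : ℝ}
    (h : ∀ x : H, c * ‖x‖ ^ 2 ≤ (⟪x, S x⟫_ℂ).im) (x : H) :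
    (⟪x, Ring.inverse S x⟫_ℂ).im ≤ - (c * ‖Ring.inverse S x‖ ^ 2) := by
  have h1 := h (Ring.inverse S x)
  have h2 : S (Ring.inverse S x) = x := by
    have := Ring.mul_inverse_cancel S hS
    exact congrArg (fun A : H →L[ℂ] H => A x) this
  rw [h2, ← inner_conj_symm, Complex.conj_im] at h1
  linarith

lemma exists_lower {T : H →L[ℂ] H} (hT : IsUnit T) :
    ∃ K : ℝ, 0 < K ∧ ∀ x : H, ‖x‖ ≤ K * ‖T x‖ := by
  refine ⟨‖Ring.inverse T‖ + 1, by positivity, fun x => ?_⟩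
  have h2 : Ring.inverse T (T x) = x := by
    have := Ring.inverse_mul_cancel T hT
    exact congrArg (fun A : H →L[ℂ] H => A x) this
  calc ‖x‖ = ‖Ring.inverse T (T x)‖ := by rw [h2]
    _ ≤ ‖Ring.inverse T‖ * ‖T x‖ := le_opNorm _ _
    _ ≤ _ := by gcongr; linarith

lemma Diss.lower_t {T : H →L[ℂ] H} (hT : Diss T) {K : ℝ} (hK : 0 < K)
    (hl : ∀ x : H, ‖x‖ ≤ K * ‖T x‖) {t : ℝ} (ht : 0 ≤ t) (x : H) :
    (2 * K)⁻¹ * ‖x‖ ≤ ‖(T + ((t : ℂ) * Complex.I) • (1 : H →L[ℂ] H)) x‖ := by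
  have h1 : t * ‖x‖ ≤ ‖(T + ((t : ℂ) * Complex.I) • (1 : H →L[ℂ] H)) x‖ := by
    have := lower_of_im (hT.im_add ((t : ℂ) * Complex.I)) x
    simpa using this
  have h2 : ‖T x‖ ≤ ‖(T + ((t : ℂ) * Complex.I) • (1 : H →L[ℂ] H)) x‖ + t * ‖x‖ := by
    have e : T x = (T + ((t : ℂ) * Complex.I) • (1 : H →L[ℂ] H)) x -
      ((t : ℂ) * Complex.I) • x := by simp
    have := norm_sub_le ((T + ((t : ℂ) * Complex.I) • (1 : H →L[ℂ] H)) x)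
      (((t : ℂ) * Complex.I) • x)
    rw [← e, norm_smul] at this
    simpa [abs_of_nonneg ht] using this
  have h3 := hl x
  rw [inv_mul_le_iff₀ (by positivity)]
  nlinarith

lemma Diss.isUnit_t {T : H →L[ℂ] H} (hT : Diss T) (hU : IsUnit T) {t : ℝ} (ht : 0 ≤ t) :
    IsUnit (T + ((t : ℂ) * Complex.I) • (1 : H →L[ℂ] H)) := by
  rcases ht.eq_or_lt with rfl | h
  · simpa using hU
  · exact hT.isUnit_add (by simpa using h)

lemma Diss.inv_bounds {T : H →L[ℂ] H} (hT : Diss T) (hU : IsUnit T) {K : ℝ} (hK : 0 < K)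
    (hl : ∀ x : H, ‖x‖ ≤ K * ‖T x‖) {t : ℝ} (ht : 0 ≤ t) :
    ‖Ring.inverse (T + ((t : ℂ) * Complex.I) • (1 : H →L[ℂ] H))‖ ≤ 2 * K ∧
    ‖Ring.inverse (T + ((t : ℂ) * Complex.I) • (1 : H →L[ℂ] H))‖ * t ≤ 1 := by
  have hu := hT.isUnit_t hU ht
  constructor
  · simpa using norm_inverse_le hu (by positivity : 0 < (2 * K)⁻¹) (hT.lower_t hK hl ht)
  · rcases ht.eq_or_lt with rfl | h
    · simp
    · have := norm_inverse_le hu h (fun x => by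
        have := lower_of_im (hT.im_add ((t : ℂ) * Complex.I)) x
        simpa using this)
      rw [← one_div, le_div_iff₀ h] at this
      exact this

lemma inverse_sub_eq {T : H →L[ℂ] H} {w : ℂ} (hu : IsUnit (T + w • (1 : H →L[ℂ] H)))
    (hw : 1 + w ≠ 0) :
    Ring.inverse (T + w • (1 : H →L[ℂ] H)) - ((1 + w)⁻¹) • (1 : H →L[ℂ] H) =
      (1 + w)⁻¹ • (Ring.inverse (T + w • (1 : H →L[ℂ] H)) * (1 - T)) := by
  have e : (1 : H →L[ℂ] H) - T = (1 + w) • (1 : H →L[ℂ] H) - (T + w • (1 : H →L[ℂ] H)) := by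
    rw [add_smul, one_smul]; abel
  rw [e, mul_sub, Ring.inverse_mul_cancel _ hu, mul_smul_comm, mul_one, smul_sub, smul_smul,
    inv_mul_cancel₀ hw, one_smul]

lemma norm_inverse_sub_le {T : H →L[ℂ] H} {w : ℂ} (hu : IsUnit (T + w • (1 : H →L[ℂ] H)))
    (hw : 1 + w ≠ 0) :
    ‖Ring.inverse (T + w • (1 : H →L[ℂ] H)) - ((1 + w)⁻¹) • (1 : H →L[ℂ] H)‖ ≤
      ‖1 + w‖⁻¹ * ‖Ring.inverse (T + w • (1 : H →L[ℂ] H))‖ * (1 + ‖T‖) := by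
  rw [inverse_sub_eq hu hw, norm_smul, norm_inv, mul_assoc]
  gcongr
  refine (norm_mul_le _ _).trans ?_
  gcongr
  refine (norm_sub_le _ _).trans ?_
  gcongr
  exact norm_id_le

lemma one_add_ne {t : ℝ} : (1 : ℂ) + (t : ℂ) * Complex.I ≠ 0 := by
  intro h
  simpa using congrArg Complex.re h

lemma norm_one_add {t : ℝ} : 1 ≤ ‖(1 : ℂ) + (t : ℂ) * Complex.I‖ ∧
    t ≤ ‖(1 : ℂ) + (t : ℂ) * Complex.I‖ := by
  constructor
  · simpa using Complex.re_le_norm ((1 : ℂ) + (t : ℂ) * Complex.I)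
  · simpa using Complex.im_le_norm ((1 : ℂ) + (t : ℂ) * Complex.I)

lemma Diss.logIntegrand_bound {T : H →L[ℂ] H} (hT : Diss T) (hU : IsUnit T) {K : ℝ} (hK : 0 < K)
    (hl : ∀ x : H, ‖x‖ ≤ K * ‖T x‖) {t : ℝ} (ht : 0 ≤ t) :
    ‖logIntegrand T t‖ ≤ ((2 * K + 1) * (1 + ‖T‖)) * (1 + t ^ 2)⁻¹ := by
  unfold logIntegrand
  refine (norm_inverse_sub_le (hT.isUnit_t hU ht) one_add_ne).trans ?_
  obtain ⟨h1, h2⟩ := hT.inv_bounds hU hK hl ht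
  obtain ⟨h3, h4⟩ := norm_one_add (t := t)
  set n := ‖Ring.inverse (T + ((t : ℂ) * Complex.I) • (1 : H →L[ℂ] H))‖
  have hn : 0 ≤ n := norm_nonneg _
  set a := ‖(1 : ℂ) + (t : ℂ) * Complex.I‖
  have ha : 0 < a := by linarith
  suffices hs : a⁻¹ * n ≤ (2 * K + 1) * (1 + t ^ 2)⁻¹ by
    calc a⁻¹ * n * (1 + ‖T‖) ≤ ((2 * K + 1) * (1 + t ^ 2)⁻¹) * (1 + ‖T‖) := by gcongr
      _ = _ := by ring
  rw [← div_eq_mul_inv, le_div_iff₀ (by positivity), mul_assoc, inv_mul_le_iff₀ ha]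
  nlinarith [mul_le_mul_of_nonneg_right h2 ht, mul_le_mul_of_nonneg_left h3 hK.le]

lemma Diss.continuousOn_logIntegrand {T : H →L[ℂ] H} (hT : Diss T) (hU : IsUnit T) :
    ContinuousOn (logIntegrand T) (Set.Ici 0) := by
  intro t ht
  apply ContinuousAt.continuousWithinAt
  unfold logIntegrand
  refine ContinuousAt.sub ?_ ?_
  · obtain ⟨u, hu⟩ := hT.isUnit_t hU ht
    have h1 := NormedRing.inverse_continuousAt u
    rw [hu] at h1
    exact ContinuousAt.comp (f := fun s : ℝ => T + ((s : ℂ) * Complex.I) • (1 : H →L[ℂ] H)) h1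
      (by fun_prop)
  · have h2 : ContinuousAt (fun s : ℝ => ((1 : ℂ) + (s : ℂ) * Complex.I)⁻¹) t :=
      ContinuousAt.inv₀ (Continuous.continuousAt (by fun_prop)) one_add_ne
    exact h2.smul continuousAt_const

lemma Diss.integrableOn_logIntegrand {T : H →L[ℂ] H} (hT : Diss T) (hU : IsUnit T) :
    IntegrableOn (logIntegrand T) (Set.Ioi 0) := by
  obtain ⟨K, hK, hl⟩ := exists_lower hU
  refine Integrable.mono' (g := fun t : ℝ => ((2 * K + 1) * (1 + ‖T‖)) * (1 + t ^ 2)⁻¹)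
    (integrable_inv_one_add_sq.const_mul _).integrableOn ?_ ?_
  · exact ((hT.continuousOn_logIntegrand hU).mono Set.Ioi_subset_Ici_self).aestronglyMeasurable
      measurableSet_Ioi
  · exact (ae_restrict_iff' measurableSet_Ioi).2 (.of_forall fun t ht =>
      hT.logIntegrand_bound hU hK hl (le_of_lt ht))

lemma Diss.tendsto_opLog {T : H →L[ℂ] H} (hT : Diss T) (hU : IsUnit T) :
    Tendsto (fun R : ℝ => (-Complex.I) • ∫ t in (0:ℝ)..R, logIntegrand T t) atTop
      (𝓝 ((-Complex.I) • ∫ t in Set.Ioi (0:ℝ), logIntegrand T t)) :=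
  (intervalIntegral_tendsto_integral_Ioi 0 (hT.integrableOn_logIntegrand hU) tendsto_id).const_smul _

lemma Diss.opLog_eq {T : H →L[ℂ] H} (hT : Diss T) (hU : IsUnit T) :
    opLog T = (-Complex.I) • ∫ t in Set.Ioi (0:ℝ), logIntegrand T t :=
  (hT.tendsto_opLog hU).limUnder_eq

/-- The quadratic form at `f` as a functional. -/
def qf (f : H) : (H →L[ℂ] H) →L[ℂ] ℂ := (innerSL ℂ f) ∘L (ContinuousLinearMap.apply ℂ H f)

lemma qf_apply (f : H) (A : H →L[ℂ] H) : qf f A = ⟪f, A f⟫_ℂ := rfl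

lemma norm_qf_le (f : H) (A : H →L[ℂ] H) : ‖qf f A‖ ≤ ‖A‖ * ‖f‖ ^ 2 := by
  rw [qf_apply]
  refine (norm_inner_le_norm _ _).trans ?_
  have := A.le_opNorm f
  nlinarith [norm_nonneg f]

/-- The integrand as a function of a complex variable. -/
def cInt (T : H →L[ℂ] H) (w : ℂ) : H →L[ℂ] H :=
  Ring.inverse (T + w • (1 : H →L[ℂ] H)) - ((1 + w)⁻¹) • (1 : H →L[ℂ] H)

lemma cInt_t (T : H →L[ℂ] H) (t : ℝ) : cInt T ((t : ℂ) * Complex.I) = logIntegrand T t := rfl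

lemma differentiableAt_inverse_comp {F : ℂ → H →L[ℂ] H} {z : ℂ} (hu : IsUnit (F z))
    (hF : DifferentiableAt ℂ F z) : DifferentiableAt ℂ (fun w => Ring.inverse (F w)) z := by
  obtain ⟨u, hu⟩ := hu
  have h1 := (hasFDerivAt_ringInverse (𝕜 := ℂ) u).differentiableAt
  rw [hu] at h1
  exact h1.comp z hF

lemma Diss.differentiableAt_cInt {T : H →L[ℂ] H} (hT : Diss T) {w : ℂ} (hw : 0 < w.im) :
    DifferentiableAt ℂ (cInt T) w := by
  have hne : 1 + w ≠ 0 := fun h => by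
    have := congrArg Complex.im h
    simp at this; linarith
  have h1 : DifferentiableAt ℂ (fun w : ℂ => Ring.inverse (T + w • (1 : H →L[ℂ] H))) w :=
    differentiableAt_inverse_comp (F := fun w : ℂ => T + w • (1 : H →L[ℂ] H))
      (hT.isUnit_add hw) (by fun_prop)
  have h2 : DifferentiableAt ℂ (fun w : ℂ => ((1 + w)⁻¹)) w :=
    DifferentiableAt.inv (by fun_prop) hne
  exact h1.sub (h2.smul_const (1 : H →L[ℂ] H))

lemma norm_cInt_le {T : H →L[ℂ] H} (hT : Diss T) {w : ℂ} (hw : 0 < w.im) {a b : ℝ}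
    (ha : 0 < a) (hb : 0 < b) (h1 : a ≤ ‖1 + w‖)
    (h2 : ∀ x : H, b * ‖x‖ ≤ ‖(T + w • (1 : H →L[ℂ] H)) x‖) :
    ‖cInt T w‖ ≤ a⁻¹ * b⁻¹ * (1 + ‖T‖) := by
  have hne : 1 + w ≠ 0 := norm_pos_iff.1 (ha.trans_le h1)
  refine (norm_inverse_sub_le (hT.isUnit_add hw) hne).trans ?_
  have := norm_inverse_le (hT.isUnit_add hw) hb h2
  gcongr

lemma im_cInt_le {T : H →L[ℂ] H} (hT : Diss T) {x e : ℝ} (hx : 0 ≤ x) (he : 0 < e) (f : H) :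
    (qf f (cInt T ((x : ℂ) + (e : ℂ) * Complex.I))).im ≤ e * ‖f‖ ^ 2 := by
  set w : ℂ := (x : ℂ) + (e : ℂ) * Complex.I with hw
  have hwim : w.im = e := by simp [hw]
  have hwre : w.re = x := by simp [hw]
  have h1 := im_inverse_le (hT.isUnit_add (by rw [hwim]; exact he)) (hT.im_add w) f
  have h2 : 0 ≤ w.im * ‖Ring.inverse (T + w • (1 : H →L[ℂ] H)) f‖ ^ 2 := by
    rw [hwim]; positivity
  have h3 : (⟪f, ((1 + w)⁻¹ • (1 : H →L[ℂ] H)) f⟫_ℂ).im = ((1 + w)⁻¹).im * ‖f‖ ^ 2 := by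
    rw [smul_apply, one_apply_eq_self, inner_smul_right, inner_self_eq_norm_sq_to_K]
    have : ((1 + w)⁻¹ * ((‖f‖ : ℝ) : ℂ) ^ 2).im = ((1 + w)⁻¹).im * ‖f‖ ^ 2 := by
      rw [← Complex.ofReal_pow, Complex.im_mul_ofReal]
    exact this
  have h4 : - e ≤ ((1 + w)⁻¹).im := by
    rw [Complex.inv_im, Complex.add_im, Complex.one_im, zero_add, hwim, neg_div, neg_le_neg_iff]
    apply div_le_self he.le
    rw [Complex.normSq_apply]
    simp only [Complex.add_re, Complex.one_re, hwre]
    nlinarith [mul_self_nonneg (1 + w).im]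
  rw [qf_apply, cInt, sub_apply, inner_sub_right, Complex.sub_im, h3]
  nlinarith [sq_nonneg ‖f‖]

lemma contour_bound {T : H →L[ℂ] H} (hT : Diss T) (f : H) {e R : ℝ} (he : 0 < e) (heR : e ≤ R)
    (hR : ‖T‖ < R) :
    (Complex.I * ∫ y in e..R, qf f (cInt T ((y : ℂ) * Complex.I))).im ≤
      e * ‖f‖ ^ 2 * R + (1 + ‖T‖) * ‖f‖ ^ 2 * R⁻¹ + (1 + ‖T‖) * ‖f‖ ^ 2 * (R - ‖T‖)⁻¹ := by
  have hR0 : 0 < R := (norm_nonneg _).trans_lt hR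
  have hd : ∀ w : ℂ, 0 < w.im → DifferentiableAt ℂ (fun w => qf f (cInt T w)) w := fun w hw =>
    (qf f).differentiableAt.comp w (hT.differentiableAt_cInt hw)
  have key := Complex.integral_boundary_rect_eq_zero_of_differentiableOn
    (fun w => qf f (cInt T w)) ((e : ℂ) * Complex.I) ((R : ℂ) + (R : ℂ) * Complex.I) (by
      intro w hw
      refine (hd w ?_).differentiableWithinAt
      have := hw.2
      simp [Set.uIcc_of_le heR] at this
      linarith [this.1])
  simp at key
  set A := ∫ x in (0:ℝ)..R, qf f (cInt T ((x : ℂ) + (e : ℂ) * Complex.I)) with hA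
  set B := ∫ x in (0:ℝ)..R, qf f (cInt T ((x : ℂ) + (R : ℂ) * Complex.I)) with hB
  set C := ∫ y in e..R, qf f (cInt T ((R : ℂ) + (y : ℂ) * Complex.I)) with hC
  have e1 : (Complex.I * ∫ y in e..R, qf f (cInt T ((y : ℂ) * Complex.I))) =
    A - B + Complex.I * C := by
    linear_combination -key
  have b1 : A.im ≤ e * ‖f‖ ^ 2 * R := by
    have hint : IntervalIntegrable (fun x : ℝ => qf f (cInt T ((x : ℂ) + (e : ℂ) * Complex.I)))
        volume 0 R := by
      apply Continuous.intervalIntegrable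
      rw [continuous_iff_continuousAt]
      intro x
      exact ContinuousAt.comp (f := fun x : ℝ => (x : ℂ) + (e : ℂ) * Complex.I)
        (hd _ (by simpa using he)).continuousAt (by fun_prop)
    have : A.im = ∫ x in (0:ℝ)..R, (qf f (cInt T ((x : ℂ) + (e : ℂ) * Complex.I))).im :=
      (Complex.imCLM.intervalIntegral_comp_comm hint).symm
    rw [this]
    have := intervalIntegral.integral_mono_on (μ := volume) hR0.le
      (f := fun x : ℝ => (qf f (cInt T ((x : ℂ) + (e : ℂ) * Complex.I))).im)
      (g := fun _ => e * ‖f‖ ^ 2) ⟨hint.1.im, hint.2.im⟩ (by simp)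
      (fun x hx => im_cInt_le hT hx.1 he f)
    refine this.trans_eq ?_
    simp; ring
  have b2 : ‖B‖ ≤ (1 + ‖T‖) * ‖f‖ ^ 2 * R⁻¹ := by
    have := intervalIntegral.norm_integral_le_of_norm_le_const (a := 0) (b := R)
      (f := fun x : ℝ => qf f (cInt T ((x : ℂ) + (R : ℂ) * Complex.I)))
      (C := R⁻¹ * R⁻¹ * (1 + ‖T‖) * ‖f‖ ^ 2) (fun x hx => by
        refine (norm_qf_le _ _).trans ?_
        gcongr
        refine norm_cInt_le hT (by simpa using hR0) hR0 hR0 ?_ ?_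
        · have := Complex.im_le_norm (1 + ((x : ℂ) + (R : ℂ) * Complex.I))
          simpa using this
        · intro y
          have := lower_of_im (hT.im_add ((x : ℂ) + (R : ℂ) * Complex.I)) y
          simpa using this)
    refine this.trans_eq ?_
    rw [sub_zero, abs_of_pos hR0]
    field_simp
  have hRT : 0 < R - ‖T‖ := by linarith
  have b3 : ‖C‖ ≤ (1 + ‖T‖) * ‖f‖ ^ 2 * (R - ‖T‖)⁻¹ := by
    have := intervalIntegral.norm_integral_le_of_norm_le_const (a := e) (b := R)
      (f := fun y : ℝ => qf f (cInt T ((R : ℂ) + (y : ℂ) * Complex.I)))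
      (C := R⁻¹ * (R - ‖T‖)⁻¹ * (1 + ‖T‖) * ‖f‖ ^ 2) (fun y hy => by
        rw [Set.uIoc_of_le heR] at hy
        refine (norm_qf_le _ _).trans ?_
        gcongr
        refine norm_cInt_le hT (by simpa using he.trans hy.1) hR0 hRT ?_ ?_
        · have := Complex.re_le_norm (1 + ((R : ℂ) + (y : ℂ) * Complex.I))
          simp at this
          linarith
        · intro x
          have h1 := Complex.re_le_norm ((R : ℂ) + (y : ℂ) * Complex.I)
          simp at h1
          have h2 : ‖((R : ℂ) + (y : ℂ) * Complex.I) • x‖ ≤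
            ‖(T + ((R : ℂ) + (y : ℂ) * Complex.I) • (1 : H →L[ℂ] H)) x‖ + ‖T x‖ := by
            have := norm_sub_le
              ((T + ((R : ℂ) + (y : ℂ) * Complex.I) • (1 : H →L[ℂ] H)) x) (T x)
            simpa using this
          rw [norm_smul] at h2
          have h3 := T.le_opNorm x
          nlinarith [mul_le_mul_of_nonneg_right h1 (norm_nonneg x)])
    refine this.trans ?_
    rw [abs_of_nonneg (by linarith)]
    calc R⁻¹ * (R - ‖T‖)⁻¹ * (1 + ‖T‖) * ‖f‖ ^ 2 * (R - e)
        ≤ R⁻¹ * (R - ‖T‖)⁻¹ * (1 + ‖T‖) * ‖f‖ ^ 2 * R := by gcongr; linarith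
      _ = _ := by field_simp
  rw [e1]
  have c1 : (Complex.I * C).im ≤ ‖C‖ := by
    simpa using Complex.re_le_norm C
  have c2 : -B.im ≤ ‖B‖ := by
    have := Complex.abs_im_le_norm B
    exact (neg_le_abs _).trans this
  simp only [Complex.add_im, Complex.sub_im]
  linarith

lemma Diss.opLog {T : H →L[ℂ] H} (hT : Diss T) (hU : IsUnit T) : Diss (opLog T) := by
  intro f
  obtain ⟨K, hK, hl⟩ := exists_lower hU
  have h1 := ((Complex.continuous_im.comp (qf f).continuous).tendsto _).comp (hT.tendsto_opLog hU)
  rw [← hT.opLog_eq hU] at h1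
  set D := (2 * K + 1) * (1 + ‖T‖) * ‖f‖ ^ 2
  have h2 : Tendsto (fun R : ℝ => -(‖f‖ ^ 2 * R⁻¹ + (1 + ‖T‖) * ‖f‖ ^ 2 * R⁻¹
      + (1 + ‖T‖) * ‖f‖ ^ 2 * (R - ‖T‖)⁻¹ + D * (R⁻¹ * R⁻¹))) atTop
      (𝓝 (-(‖f‖ ^ 2 * 0 + (1 + ‖T‖) * ‖f‖ ^ 2 * 0 + (1 + ‖T‖) * ‖f‖ ^ 2 * 0 + D * (0 * 0)))) := by
    have a1 : Tendsto (fun R : ℝ => R⁻¹) atTop (𝓝 0) := tendsto_inv_atTop_zero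
    have a2 : Tendsto (fun R : ℝ => (R - ‖T‖)⁻¹) atTop (𝓝 0) :=
      tendsto_inv_atTop_zero.comp (tendsto_atTop_add_const_right atTop (-‖T‖) tendsto_id)
    exact ((((a1.const_mul _).add (a1.const_mul _)).add (a2.const_mul _)).add
      ((a1.mul a1).const_mul _)).neg
  simp only [mul_zero, add_zero, neg_zero] at h2
  refine le_of_tendsto_of_tendsto h2 h1 ?_
  filter_upwards [eventually_gt_atTop ‖T‖, eventually_ge_atTop (1 : ℝ)] with R hR hR1
  have hR0 : 0 < R := by linarith
  have hint : ∀ a b : ℝ, 0 ≤ a → 0 ≤ b → IntervalIntegrable (logIntegrand T) volume a b :=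
    fun a b ha hb => ((hT.continuousOn_logIntegrand hU).mono (fun x hx =>
      (le_min ha hb).trans hx.1)).intervalIntegrable
  set e := R⁻¹ * R⁻¹ with he
  have he0 : 0 < e := by positivity
  have heR : e ≤ R := by
    have : R⁻¹ ≤ 1 := inv_le_one_of_one_le₀ hR1
    have : 0 < R⁻¹ := by positivity
    nlinarith
  have hc := contour_bound hT f he0 heR hR
  have s1 : ∫ t in (0:ℝ)..R, logIntegrand T t =
      (∫ t in (0:ℝ)..e, logIntegrand T t) + ∫ t in e..R, logIntegrand T t :=
    (intervalIntegral.integral_add_adjacent_intervals (hint _ _ le_rfl he0.le)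
      (hint _ _ he0.le hR0.le)).symm
  have s2 : qf f (∫ t in e..R, logIntegrand T t) =
      ∫ y in e..R, qf f (cInt T ((y : ℂ) * Complex.I)) :=
    ((qf f).intervalIntegral_comp_comm (hint _ _ he0.le hR0.le)).symm
  have s3 : ‖qf f (∫ t in (0:ℝ)..e, logIntegrand T t)‖ ≤ D * e := by
    refine (norm_qf_le _ _).trans ?_
    have := intervalIntegral.norm_integral_le_of_norm_le_const (a := 0) (b := e)
      (f := logIntegrand T) (C := (2 * K + 1) * (1 + ‖T‖)) (fun t ht => by
        rw [Set.uIoc_of_le he0.le] at ht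
        refine (hT.logIntegrand_bound hU hK hl ht.1.le).trans ?_
        apply mul_le_of_le_one_right (by positivity)
        apply inv_le_one_of_one_le₀
        nlinarith [sq_nonneg t])
    rw [sub_zero, abs_of_pos he0] at this
    calc _ ≤ ((2 * K + 1) * (1 + ‖T‖) * e) * ‖f‖ ^ 2 := by gcongr
      _ = _ := by ring
  simp only [Function.comp]
  rw [s1, smul_add, map_add, map_smul, map_smul, s2, smul_eq_mul, smul_eq_mul, Complex.add_im]
  have c1 : -(D * e) ≤ (-Complex.I * qf f (∫ t in (0:ℝ)..e, logIntegrand T t)).im := by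
    have := (abs_le.1 ((Complex.abs_im_le_norm
      (-Complex.I * qf f (∫ t in (0:ℝ)..e, logIntegrand T t))))).1
    have e2 : ‖-Complex.I * qf f (∫ t in (0:ℝ)..e, logIntegrand T t)‖ =
      ‖qf f (∫ t in (0:ℝ)..e, logIntegrand T t)‖ := by simp
    rw [e2] at this
    linarith
  have c2 : e * ‖f‖ ^ 2 * R = ‖f‖ ^ 2 * R⁻¹ := by
    rw [he]; field_simp
  rw [c2] at hc
  rw [neg_mul Complex.I (∫ y in e..R, _), Complex.neg_im]
  linarith

lemma Diss.neg_adjoint {T : H →L[ℂ] H} (hT : Diss T) : Diss (-(adjoint T)) := by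
  intro x
  rw [neg_apply, inner_neg_right, adjoint_inner_right, ← inner_conj_symm]
  have := hT x
  rw [Complex.neg_im, Complex.conj_im, neg_neg]
  exact this

lemma isUnit_neg_adjoint {T : H →L[ℂ] H} (hU : IsUnit T) : IsUnit (-(adjoint T)) :=
  (hU.star).neg

lemma inverse_neg_adjoint {T : H →L[ℂ] H} (t : ℝ)
    (hU : IsUnit (T + ((t : ℂ) * Complex.I) • (1 : H →L[ℂ] H))) :
    Ring.inverse (-(adjoint T) + ((t : ℂ) * Complex.I) • (1 : H →L[ℂ] H)) =
      - adjoint (Ring.inverse (T + ((t : ℂ) * Complex.I) • (1 : H →L[ℂ] H))) := by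
  have e : -(adjoint T) + ((t : ℂ) * Complex.I) • (1 : H →L[ℂ] H) =
      - star (T + ((t : ℂ) * Complex.I) • (1 : H →L[ℂ] H)) := by
    rw [star_add, star_smul, star_one, star_eq_adjoint]
    simp [add_comm]
  obtain ⟨u, hu⟩ := hU
  rw [e, ← hu, Ring.inverse_unit, ← Units.coe_star, ← Units.val_neg, Ring.inverse_unit,
    ← star_eq_adjoint, ← Units.coe_star, ← Units.val_neg, star_inv, inv_neg]

lemma qf_logIntegrand_neg_adjoint {T : H →L[ℂ] H} (hT : Diss T) (hU : IsUnit T) {t : ℝ}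
    (ht : 0 ≤ t) (f : H) :
    qf f (logIntegrand (-(adjoint T)) t) = - (starRingEnd ℂ) (qf f (logIntegrand T t))
      - (((2 * ‖f‖ ^ 2) * (1 + t ^ 2)⁻¹ : ℝ) : ℂ) := by
  unfold logIntegrand
  rw [inverse_neg_adjoint t (hT.isUnit_t hU ht)]
  simp only [qf_apply, sub_apply, neg_apply, inner_sub_right, inner_neg_right, smul_apply,
    one_apply_eq_self, inner_smul_right, adjoint_inner_right, map_sub, map_mul, inner_conj_symm]
  have e1 : ⟪f, f⟫_ℂ = ((‖f‖ ^ 2 : ℝ) : ℂ) := by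
    rw [inner_self_eq_norm_sq_to_K]; push_cast; rfl
  have e2 : ((1 : ℂ) + t * Complex.I)⁻¹ + (starRingEnd ℂ) ((1 : ℂ) + t * Complex.I)⁻¹ =
      2 * (1 + (t : ℂ) ^ 2)⁻¹ := by
    have h1 := one_add_ne (t := t)
    have h2 : (1 : ℂ) - t * Complex.I ≠ 0 := by
      have := one_add_ne (t := -t)
      simpa [sub_eq_add_neg] using this
    have h3 : (1 : ℂ) + (t : ℂ) ^ 2 = (1 + t * Complex.I) * (1 - t * Complex.I) := by
      ring_nf; simp
    rw [h3]
    simp only [map_inv₀, map_add, map_one, map_mul, Complex.conj_ofReal, Complex.conj_I, mul_neg,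
      ← sub_eq_add_neg]
    field_simp
    ring
  rw [e1]
  push_cast
  linear_combination (-(‖f‖ : ℂ) ^ 2) * e2

lemma Diss.opLog_le {T : H →L[ℂ] H} (hT : Diss T) (hU : IsUnit T) (f : H) :
    (⟪f, SpectralShift.opLog T f⟫_ℂ).im ≤ Real.pi * ‖f‖ ^ 2 := by
  have hT' := hT.neg_adjoint
  have hU' := isUnit_neg_adjoint hU
  have h0 := hT'.opLog hU' f
  have i1 := hT.integrableOn_logIntegrand hU
  have i2 := hT'.integrableOn_logIntegrand hU'
  rw [← qf_apply, hT'.opLog_eq hU', map_smul, ← (qf f).integral_comp_comm i2] at h0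
  rw [← qf_apply, hT.opLog_eq hU, map_smul, ← (qf f).integral_comp_comm i1]
  have i3 : IntegrableOn (fun t => qf f (logIntegrand T t)) (Set.Ioi 0) :=
    (qf f).integrable_comp i1
  have i4 : IntegrableOn (fun t => (starRingEnd ℂ) (qf f (logIntegrand T t))) (Set.Ioi 0) :=
    Complex.conjCLE.toContinuousLinearMap.integrable_comp i3
  have e1 : ∫ t in Set.Ioi (0:ℝ), qf f (logIntegrand (-(adjoint T)) t) =
      - (starRingEnd ℂ) (∫ t in Set.Ioi (0:ℝ), qf f (logIntegrand T t)) -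
        ((Real.pi * ‖f‖ ^ 2 : ℝ) : ℂ) := by
    rw [setIntegral_congr_fun measurableSet_Ioi
      (fun t ht => qf_logIntegrand_neg_adjoint hT hU (le_of_lt ht) f)]
    have i5 : IntegrableOn (fun t => -(starRingEnd ℂ) (qf f (logIntegrand T t))) (Set.Ioi 0) :=
      i4.neg
    rw [integral_sub i5, integral_neg, integral_conj]
    · have e3 : ∫ t in Set.Ioi (0:ℝ), (((2 * ‖f‖ ^ 2) * (1 + t ^ 2)⁻¹ : ℝ) : ℂ) =
          ((Real.pi * ‖f‖ ^ 2 : ℝ) : ℂ) := by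
        have e4 : ∫ t in Set.Ioi (0:ℝ), (2 * ‖f‖ ^ 2) * (1 + t ^ 2)⁻¹ = Real.pi * ‖f‖ ^ 2 := by
          rw [integral_const_mul, integral_Ioi_inv_one_add_sq, Real.arctan_zero]
          ring
        rw [← e4]
        exact integral_ofReal (𝕜 := ℂ) (f := fun t : ℝ => (2 * ‖f‖ ^ 2) * (1 + t ^ 2)⁻¹)
      rw [e3]
    · exact ((integrable_inv_one_add_sq.const_mul _).integrableOn).ofReal
  rw [e1] at h0
  simp only [smul_eq_mul, neg_mul, Complex.neg_im, Complex.I_mul_im, Complex.sub_re,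
    Complex.neg_re, Complex.conj_re, Complex.ofReal_re] at h0 ⊢
  linarith

lemma harnack {m : ℂ → ℂ} {c : ℂ} {R : ℝ} (hR : 0 < R)
    (hd : DifferentiableOn ℂ m (Metric.ball c R)) (hp : ∀ w ∈ Metric.ball c R, 0 < (m w).im)
    {w : ℂ} (hw : w ∈ Metric.ball c (R / 2)) : ‖m w‖ ≤ 3 * ‖m c‖ := by
  have hc : c ∈ Metric.ball c R := Metric.mem_ball_self hR
  have hw' : w ∈ Metric.ball c R := Metric.ball_subset_ball (by linarith) hw
  have hne : ∀ v ∈ Metric.ball c R, m v - (starRingEnd ℂ) (m c) ≠ 0 := fun v hv h => by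
    have := congrArg Complex.im h
    simp at this
    linarith [hp v hv, hp c hc]
  have hlt : ∀ v ∈ Metric.ball c R, ‖m v - m c‖ < ‖m v - (starRingEnd ℂ) (m c)‖ := by
    intro v hv
    rw [Complex.norm_def, Complex.norm_def]
    apply Real.sqrt_lt_sqrt (Complex.normSq_nonneg _)
    rw [Complex.normSq_apply, Complex.normSq_apply]
    simp
    nlinarith [mul_pos (hp v hv) (hp c hc)]
  have hs := Complex.dist_le_div_mul_dist_of_mapsTo_ball
    (f := fun v => (m v - m c) / (m v - (starRingEnd ℂ) (m c))) (c := c) (R₁ := R) (R₂ := 1)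
    (z := w)
    ((hd.sub_const _).div (hd.sub_const _) hne) (by
      intro v hv
      simp only [sub_self, zero_div]
      rw [mem_closedBall_zero_iff, norm_div]
      exact div_le_one_of_le₀ (hlt v hv).le (norm_nonneg _)) hw'
  simp only [sub_self, zero_div, dist_zero_right, norm_div] at hs
  have hwd : dist w c < R / 2 := hw
  have h2 : 1 / R * dist w c ≤ 1 / 2 := by
    rw [div_mul_eq_mul_div, one_mul, div_le_iff₀ hR]; linarith
  have h3 := hs.trans h2
  rw [div_le_iff₀ (norm_pos_iff.2 (hne w hw'))] at h3
  have h4 : ‖m w - (starRingEnd ℂ) (m c)‖ ≤ ‖m w‖ + ‖m c‖ := by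
    refine (norm_sub_le _ _).trans ?_
    rw [RCLike.norm_conj]
  have h5 : ‖m w‖ - ‖m c‖ ≤ ‖m w - m c‖ := norm_sub_norm_le _ _
  linarith

lemma norm_le_of_qf {A : H →L[ℂ] H} {k : ℝ} (hk : 0 < k)
    (h : ∀ x : H, ‖⟪x, A x⟫_ℂ‖ ≤ k * ‖x‖ ^ 2) (x : H) : ‖A x‖ ≤ 2 * k * ‖x‖ := by
  have hp : ∀ y : H, ‖⟪A x, y⟫_ℂ‖ ≤ k * (‖x‖ ^ 2 + ‖y‖ ^ 2) := by
    intro y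
    have h' : ∀ v : H, ‖⟪(A : H →ₗ[ℂ] H) v, v⟫_ℂ‖ ≤ k * ‖v‖ ^ 2 := fun v => by
      rw [norm_inner_symm]; exact h v
    have e := inner_map_polarization' (A : H →ₗ[ℂ] H) x y
    have e' : ⟪A x, y⟫_ℂ = ⟪(A : H →ₗ[ℂ] H) x, y⟫_ℂ := rfl
    rw [e', e, norm_div]
    have p1 := parallelogram_law_with_norm ℂ x y
    have p2 := parallelogram_law_with_norm ℂ x (Complex.I • y)
    rw [norm_smul, Complex.norm_I, one_mul] at p2
    have q1 := h' (x + y)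
    have q2 := h' (x - y)
    have q3 := h' (x + Complex.I • y)
    have q4 := h' (x - Complex.I • y)
    set a1 := ⟪(A : H →ₗ[ℂ] H) (x + y), x + y⟫_ℂ
    set a2 := ⟪(A : H →ₗ[ℂ] H) (x - y), x - y⟫_ℂ
    set a3 := ⟪(A : H →ₗ[ℂ] H) (x + Complex.I • y), x + Complex.I • y⟫_ℂ
    set a4 := ⟪(A : H →ₗ[ℂ] H) (x - Complex.I • y), x - Complex.I • y⟫_ℂ
    have n1 := norm_add_le (a1 - a2 - Complex.I * a3) (Complex.I * a4)
    have n2 := norm_sub_le (a1 - a2) (Complex.I * a3)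
    have n3 := norm_sub_le a1 a2
    rw [norm_mul, Complex.norm_I, one_mul] at n1 n2
    have n4 : ‖(4 : ℂ)‖ = 4 := by simp
    rw [n4, div_le_iff₀ (by norm_num)]
    nlinarith
  have h1 := hp ((((2 * k)⁻¹ : ℝ) : ℂ) • A x)
  have hi : 0 < (2 * k)⁻¹ := by positivity
  rw [inner_smul_right, norm_mul, norm_smul, Complex.norm_real, Real.norm_of_nonneg hi.le,
    inner_self_eq_norm_sq_to_K] at h1
  have e1 : ‖(((‖A x‖ : ℝ) : ℂ)) ^ 2‖ = ‖A x‖ ^ 2 := by simp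
  erw [e1] at h1
  have h2 : ‖A x‖ ^ 2 ≤ (2 * k * ‖x‖) ^ 2 := by
    have h3 := mul_le_mul_of_nonneg_left h1 (by positivity : 0 ≤ 4 * k)
    have e2 : 4 * k * ((2 * k)⁻¹ * ‖A x‖ ^ 2) = 2 * ‖A x‖ ^ 2 := by field_simp; ring
    have e3 : 4 * k * (k * (‖x‖ ^ 2 + ((2 * k)⁻¹ * ‖A x‖) ^ 2)) =
      4 * k ^ 2 * ‖x‖ ^ 2 + ‖A x‖ ^ 2 := by field_simp; ring
    rw [e2, e3] at h3
    nlinarith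
  exact le_of_sq_le_sq h2 (by positivity)

lemma isUnit_near {M : ℂ → H →L[ℂ] H} (hd : DifferentiableOn ℂ M {z : ℂ | 0 < z.im})
    (hM : ∀ z : ℂ, 0 < z.im → Diss (M z)) {c : ℂ} (hc : 0 < c.im) (hu : IsUnit (M c))
    {w : ℂ} (hw : w ∈ Metric.ball c (c.im / 2)) : IsUnit (M w) := by
  obtain ⟨K, hK, hl⟩ := exists_lower hu
  have hball : ∀ v ∈ Metric.ball c c.im, 0 < v.im := by
    intro v hv
    have h1 : ‖v - c‖ < c.im := by rwa [mem_ball_iff_norm] at hv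
    have h2 := (abs_lt.1 ((Complex.abs_im_le_norm (v - c)).trans_lt h1)).1
    simp at h2
    linarith
  have hw0 : 0 < w.im := hball w (Metric.ball_subset_ball (by linarith) hw)
  have hopen : IsOpen {z : ℂ | 0 < z.im} := isOpen_lt continuous_const Complex.continuous_im
  -- uniform bound
  have hb : ∀ e : ℝ, 0 < e →
      ‖Ring.inverse (M w + ((e : ℂ) * Complex.I) • (1 : H →L[ℂ] H))‖ ≤ 12 * K := by
    intro e he
    have heI : 0 < ((e : ℂ) * Complex.I).im := by simpa using he
    refine opNorm_le_bound _ (by positivity) fun x => ?_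
    have := norm_le_of_qf (A := Ring.inverse (M w + ((e : ℂ) * Complex.I) • (1 : H →L[ℂ] H)))
      (k := 6 * K) (by positivity) (fun x => by
        rcases eq_or_ne x 0 with rfl | hx
        · simp
        have hh := harnack (m := fun v =>
          - qf x (Ring.inverse (M v + ((e : ℂ) * Complex.I) • (1 : H →L[ℂ] H)))) hc
          (by
            intro v hv
            have hv0 := hball v hv
            have d1 := (hd v hv0).differentiableAt (hopen.mem_nhds hv0)
            have d2 := differentiableAt_inverse_comp
              (F := fun v => M v + ((e : ℂ) * Complex.I) • (1 : H →L[ℂ] H))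
              ((hM v hv0).isUnit_add heI) (d1.add_const _)
            exact ((qf x).differentiableAt.comp v d2).neg.differentiableWithinAt)
          (by
            intro v hv
            have hv0 := hball v hv
            have u := (hM v hv0).isUnit_add heI
            have h1 := im_inverse_le u ((hM v hv0).im_add ((e : ℂ) * Complex.I)) x
            have h2 : Ring.inverse (M v + ((e : ℂ) * Complex.I) • (1 : H →L[ℂ] H)) x ≠ 0 := by
              intro h0
              have := congrArg (fun A : H →L[ℂ] H => A x) (Ring.mul_inverse_cancel _ u)
              have h9 : (M v + ((e : ℂ) * Complex.I) • (1 : H →L[ℂ] H))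
                (Ring.inverse (M v + ((e : ℂ) * Complex.I) • (1 : H →L[ℂ] H)) x) = x := this
              rw [h0, map_zero] at h9
              exact hx h9.symm
            have h3 : 0 < ‖Ring.inverse (M v + ((e : ℂ) * Complex.I) • (1 : H →L[ℂ] H)) x‖ :=
              norm_pos_iff.2 h2
            rw [Complex.neg_im, qf_apply]
            have : 0 < ((e : ℂ) * Complex.I).im *
              ‖Ring.inverse (M v + ((e : ℂ) * Complex.I) • (1 : H →L[ℂ] H)) x‖ ^ 2 := by
              positivity
            linarith) hw
        simp only [norm_neg] at hh
        refine hh.trans ?_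
        have h5 := norm_qf_le x (Ring.inverse (M c + ((e : ℂ) * Complex.I) • (1 : H →L[ℂ] H)))
        have h6 := ((hM c hc).inv_bounds hu hK hl he.le).1
        nlinarith [mul_le_mul_of_nonneg_right h6 (sq_nonneg ‖x‖)]) x
    linarith
  set e : ℝ := (24 * K)⁻¹ with he
  have he0 : 0 < e := by positivity
  have u := (hM w hw0).isUnit_add (w := (e : ℂ) * Complex.I) (by simpa using he0)
  set S := M w + ((e : ℂ) * Complex.I) • (1 : H →L[ℂ] H) with hS
  have e1 : M w = S * (1 - ((e : ℂ) * Complex.I) • Ring.inverse S) := by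
    rw [mul_sub, mul_one, mul_smul_comm, Ring.mul_inverse_cancel _ u, hS]
    abel
  rw [e1]
  refine u.mul (isUnit_one_sub_of_norm_lt_one ?_)
  rw [norm_smul]
  have h1 := hb e he0
  have h2 : ‖(e : ℂ) * Complex.I‖ = e := by simp [abs_of_pos he0]
  rw [h2]
  calc e * ‖Ring.inverse S‖ ≤ e * (12 * K) := by gcongr
    _ = 1 / 2 := by rw [he]; field_simp; norm_num
    _ < 1 := by norm_num

lemma isUnit_all {M : ℂ → H →L[ℂ] H} (hd : DifferentiableOn ℂ M {z : ℂ | 0 < z.im})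
    (hM : ∀ z : ℂ, 0 < z.im → Diss (M z)) {c : ℂ} (hc : 0 < c.im) (hu : IsUnit (M c))
    {w : ℂ} (hw : 0 < w.im) : IsUnit (M w) := by
  have hopen : IsOpen {z : ℂ | 0 < z.im} := isOpen_lt continuous_const Complex.continuous_im
  have hpre : IsPreconnected {z : ℂ | 0 < z.im} := (convex_halfSpace_im_gt 0).isPreconnected
  have := hpre.subset_of_closure_inter_subset (u := {z : ℂ | 0 < z.im ∧ IsUnit (M z)})
    (hd.continuousOn.isOpen_inter_preimage hopen Units.isOpen) ⟨c, hc, hc, hu⟩ (by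
      rintro z ⟨hz, hz0⟩
      have hz0 : 0 < z.im := hz0
      refine ⟨hz0, ?_⟩
      obtain ⟨v, ⟨hv0, hvu⟩, hv⟩ := Metric.mem_closure_iff.1 hz (z.im / 4) (by positivity)
      refine isUnit_near hd hM hv0 hvu ?_
      have h1 : ‖z - v‖ < z.im / 4 := by rwa [dist_eq_norm] at hv
      have h2 := (abs_lt.1 ((Complex.abs_im_le_norm (z - v)).trans_lt h1)).2
      simp at h2
      rw [Metric.mem_ball]
      linarith)
  exact (this hw).2

lemma differentiableAt_opLog {M : ℂ → H →L[ℂ] H} (hd : DifferentiableOn ℂ M {z : ℂ | 0 < z.im})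
    (hM : ∀ z : ℂ, 0 < z.im → Diss (M z)) (hu : ∀ z : ℂ, 0 < z.im → IsUnit (M z))
    {c : ℂ} (hc : 0 < c.im) : DifferentiableAt ℂ (fun z => opLog (M z)) c := by
  have hopen : IsOpen {z : ℂ | 0 < z.im} := isOpen_lt continuous_const Complex.continuous_im
  have hn : {z : ℂ | 0 < z.im} ∈ 𝓝 c := hopen.mem_nhds hc
  have hcont : ContinuousAt M c := (hd.differentiableAt hn).continuousAt
  have hcd : ContinuousAt (deriv M) c :=
    ((hd.deriv hopen).differentiableAt hn).continuousAt
  have hci : ContinuousAt (fun z => Ring.inverse (M z)) c :=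
    (differentiableAt_inverse_comp (hu c hc) (hd.differentiableAt hn)).continuousAt
  set K := ‖Ring.inverse (M c)‖ + 1 with hKdef
  set L := ‖deriv M c‖ + 1 with hLdef
  have hK : 0 < K := by positivity
  have hL : 0 < L := by positivity
  have ev1 : ∀ᶠ z in 𝓝 c, ‖Ring.inverse (M z)‖ < K :=
    hci.norm.eventually_lt continuousAt_const (by simp [hKdef])
  have ev2 : ∀ᶠ z in 𝓝 c, ‖deriv M z‖ < L :=
    hcd.norm.eventually_lt continuousAt_const (by simp [hLdef])
  obtain ⟨s, hs, hsub⟩ : ∃ s ∈ 𝓝 c, ∀ z ∈ s,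
      ‖Ring.inverse (M z)‖ < K ∧ ‖deriv M z‖ < L ∧ 0 < z.im :=
    ⟨_, (ev1.and (ev2.and hn)), fun z hz => hz⟩
  have hl : ∀ z ∈ s, ∀ x : H, ‖x‖ ≤ K * ‖M z x‖ := by
    intro z hz x
    have h2 : Ring.inverse (M z) (M z x) = x := by
      have := Ring.inverse_mul_cancel (M z) (hu z (hsub z hz).2.2)
      exact congrArg (fun A : H →L[ℂ] H => A x) this
    calc ‖x‖ = ‖Ring.inverse (M z) (M z x)‖ := by rw [h2]
      _ ≤ ‖Ring.inverse (M z)‖ * ‖M z x‖ := le_opNorm _ _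
      _ ≤ _ := by gcongr; exact (hsub z hz).1.le
  have hderiv : ∀ z, 0 < z.im → ∀ t : ℝ, 0 ≤ t → HasDerivAt (fun z => logIntegrand (M z) t)
      (-(Ring.inverse (M z + ((t : ℂ) * Complex.I) • (1 : H →L[ℂ] H)) * deriv M z *
        Ring.inverse (M z + ((t : ℂ) * Complex.I) • (1 : H →L[ℂ] H)))) z := by
    intro z hz t ht
    obtain ⟨u, hu'⟩ := (hM z hz).isUnit_t (hu z hz) ht
    have h1 := hasFDerivAt_ringInverse (𝕜 := ℂ) u
    rw [hu'] at h1
    have h2 : HasDerivAt (fun z => M z + ((t : ℂ) * Complex.I) • (1 : H →L[ℂ] H))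
      (deriv M z) z := ((hd.differentiableAt (hopen.mem_nhds hz)).hasDerivAt).add_const _
    have h3 := (h1.comp_hasDerivAt z h2).sub_const
      (((1 : ℂ) + (t : ℂ) * Complex.I)⁻¹ • (1 : H →L[ℂ] H))
    rw [← hu', Ring.inverse_unit]
    exact h3
  have main := hasDerivAt_integral_of_dominated_loc_of_deriv_le
    (μ := volume.restrict (Set.Ioi (0:ℝ)))
    (F := fun z t => logIntegrand (M z) t)
    (F' := fun z t => -(Ring.inverse (M z + ((t : ℂ) * Complex.I) • (1 : H →L[ℂ] H)) * deriv M z *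
        Ring.inverse (M z + ((t : ℂ) * Complex.I) • (1 : H →L[ℂ] H))))
    (x₀ := c) (s := s) (bound := fun t => ((4 * K ^ 2 + 1) * L) * (1 + t ^ 2)⁻¹) hs
    (by
      filter_upwards [hn] with z hz
      exact ((hM z hz).integrableOn_logIntegrand (hu z hz)).aestronglyMeasurable)
    ((hM c hc).integrableOn_logIntegrand (hu c hc))
    (by
      refine ContinuousOn.aestronglyMeasurable ?_ measurableSet_Ioi
      have : ContinuousOn (fun t : ℝ =>
          Ring.inverse (M c + ((t : ℂ) * Complex.I) • (1 : H →L[ℂ] H))) (Set.Ioi 0) := by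
        intro t ht
        apply ContinuousAt.continuousWithinAt
        obtain ⟨u, hu'⟩ := (hM c hc).isUnit_t (hu c hc) (le_of_lt ht)
        have h1 := NormedRing.inverse_continuousAt u
        rw [hu'] at h1
        exact ContinuousAt.comp
          (f := fun s : ℝ => M c + ((s : ℂ) * Complex.I) • (1 : H →L[ℂ] H)) h1 (by fun_prop)
      exact ((this.mul continuousOn_const).mul this).neg)
    (by
      refine (ae_restrict_iff' measurableSet_Ioi).2 (.of_forall fun t ht z hz => ?_)
      have ht : 0 < t := ht
      obtain ⟨_, h2, h3⟩ := hsub z hz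
      obtain ⟨b1, b2⟩ := (hM z h3).inv_bounds (hu z h3) hK (hl z hz) ht.le
      rw [norm_neg]
      set A := Ring.inverse (M z + ((t : ℂ) * Complex.I) • (1 : H →L[ℂ] H))
      have hA : 0 ≤ ‖A‖ := norm_nonneg _
      have b3 : ‖A‖ * ‖A‖ ≤ (4 * K ^ 2 + 1) * (1 + t ^ 2)⁻¹ := by
        rw [← div_eq_mul_inv, le_div_iff₀ (by positivity)]
        have c1 := mul_le_mul b1 b1 hA (by positivity)
        have c2 := mul_le_mul b2 b2 (by positivity) zero_le_one
        nlinarith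
      calc ‖A * deriv M z * A‖ ≤ ‖A‖ * ‖deriv M z‖ * ‖A‖ :=
            (norm_mul_le _ _).trans (by gcongr; exact norm_mul_le _ _)
        _ ≤ ‖A‖ * L * ‖A‖ := by gcongr
        _ = (‖A‖ * ‖A‖) * L := by ring
        _ ≤ ((4 * K ^ 2 + 1) * (1 + t ^ 2)⁻¹) * L := by gcongr
        _ = _ := by ring)
    ((integrable_inv_one_add_sq.const_mul _).integrableOn)
    (by
      refine (ae_restrict_iff' measurableSet_Ioi).2 (.of_forall fun t ht z hz => ?_)
      exact hderiv z (hsub z hz).2.2 t (le_of_lt ht))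
  refine ((main.2.differentiableAt).const_smul (-Complex.I)).congr_of_eventuallyEq ?_
  filter_upwards [hn] with z hz
  exact (hM z hz).opLog_eq (hu z hz)

/-- Lemma 2.6: if `M` is a Herglotz operator which is boundedly invertible somewhere
(and hence everywhere) in `ℂ₊`, then `log M` is a Herglotz operator and
`0 ≤ Im (log M(z)) ≤ π I` on `ℂ₊`. -/
theorem opLog_herglotz [SeparableSpace H]
    (M : ℂ → H →L[ℂ] H) (hM : IsHerglotz M)
    (z₀ : ℂ) (hz₀ : 0 < z₀.im) (hM₀ : IsUnit (M z₀)) :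
    IsHerglotz (fun z => opLog (M z)) ∧
    ∀ z : ℂ, 0 < z.im →
      (imPart (opLog (M z))).IsPositive ∧
      (((Real.pi : ℂ) • (1 : H →L[ℂ] H)) - imPart (opLog (M z))).IsPositive := by
  obtain ⟨hd, hp⟩ := hM
  have hD : ∀ z : ℂ, 0 < z.im → Diss (M z) := fun z hz => (imPart_isPositive_iff _).1 (hp z hz)
  have hU : ∀ z : ℂ, 0 < z.im → IsUnit (M z) := fun z hz => isUnit_all hd hD hz₀ hM₀ hz
  have hpos : ∀ z : ℂ, 0 < z.im → (imPart (opLog (M z))).IsPositive := fun z hz =>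
    (imPart_isPositive_iff _).2 ((hD z hz).opLog (hU z hz))
  exact ⟨⟨fun z hz => (differentiableAt_opLog hd hD hU hz).differentiableWithinAt, hpos⟩,
    fun z hz => ⟨hpos z hz, sub_imPart_isPositive _ ((hD z hz).opLog_le (hU z hz))⟩⟩

end SpectralShift
end
end

section
/- Let M : ℂ₊ → B(H) be a Herglotz operator with M(z₀)⁻¹ ∈ B(H) for some (and hence all) z₀ ∈ ℂ₊, and let {Ξ(λ)}_{λ∈ℝ} and C = C* ∈ B(H) realize the representation log(M(z)) = C + ∫_ℝ dλ Ξ(λ)((λ − z)⁻¹ − λ(1 + λ²)⁻¹), with 0 ≤ Ξ(λ) ≤ I_H a.e. If in addition Im(log(M(z₀))) is trace class for some (and hence all) z₀ ∈ ℂ₊, then: Ξ(λ) is a nonnegative trace class operator for a.e. λ ∈ ℝ; the function λ ↦ tr_H(Ξ(λ)) is nonnegative, locally integrable on ℝ, and satisfies ∫_ℝ dλ (1 + λ²)⁻¹ tr_H(Ξ(λ)) < ∞; and for all z ∈ ℂ₊, tr_H(Im(log(M(z)))) = Im(z) ∫_ℝ dλ tr_H(Ξ(λ)) |λ − z|⁻².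 -/
open Complex Filter MeasureTheory TopologicalSpace ContinuousLinearMap
open scoped InnerProductSpace Topology

noncomputable section

namespace SpectralShift

variable {H : Type*} [NormedAddCommGroup H] [InnerProductSpace ℂ H] [CompleteSpace H]

section Helpers

theorem hb_countable [SeparableSpace H] {w : Set H} (b : HilbertBasis w ℂ H) : Countable w := by
  have hd : Pairwise (Function.onFun Disjoint fun i : w => Metric.ball (b i) (1/2)) := by
    intro i j hij
    apply Metric.ball_disjoint_ball
    have h2 : ‖b i - b j‖ ^ 2 = 2 := by
      have h0 := b.orthonormal.2 hij
      rw [@norm_sub_sq ℂ, h0, b.orthonormal.1 i, b.orthonormal.1 j]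
      norm_num
    rw [dist_eq_norm]
    nlinarith [norm_nonneg (b i - b j)]
  exact Pairwise.countable_of_isOpen_disjoint hd (fun i => Metric.isOpen_ball)
    (fun i => ⟨b i, Metric.mem_ball_self (by norm_num)⟩)

/-- diagonal sum -/
def diagSum {ι : Type*} (b : HilbertBasis ι ℂ H) (T : H →L[ℂ] H) : ENNReal :=
  ∑' i, ENNReal.ofReal (⟪b i, T (b i)⟫_ℂ).re

theorem parseval {ι : Type*} (b : HilbertBasis ι ℂ H) (x : H) :
    ENNReal.ofReal (‖x‖ ^ 2) = ∑' i, ENNReal.ofReal (‖⟪b i, x⟫_ℂ‖ ^ 2) := by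
  have h := b.hasSum_inner_mul_inner x x
  have h2 : HasSum (fun i => ‖⟪b i, x⟫_ℂ‖ ^ 2) (‖x‖ ^ 2) := by
    have h3 := Complex.hasSum_re h
    have e1 : (⟪x, x⟫_ℂ).re = ‖x‖ ^ 2 := by
      rw [inner_self_eq_norm_sq_to_K]; norm_cast
    have e2 : ∀ i, (⟪x, b i⟫_ℂ * ⟪b i, x⟫_ℂ).re = ‖⟪b i, x⟫_ℂ‖ ^ 2 := by
      intro i
      rw [← inner_conj_symm x (b i), mul_comm, Complex.mul_conj, Complex.normSq_eq_norm_sq]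
      norm_cast
    rw [e1] at h3
    simpa only [e2] using h3
  rw [← h2.tsum_eq, ENNReal.ofReal_tsum_of_nonneg (fun i => by positivity) h2.summable]

theorem pos_inner_real {T : H →L[ℂ] H} (hT : T.IsPositive) (x : H) :
    0 ≤ (⟪x, T x⟫_ℂ).re ∧ ⟪x, T x⟫_ℂ = ((⟪x, T x⟫_ℂ).re : ℂ) := by
  have h := hT.inner_nonneg_right x
  rw [Complex.nonneg_iff] at h
  refine ⟨h.1, ?_⟩
  apply Complex.ext <;> simp [← h.2]

theorem diagSum_indep {ι κ : Type*} (b : HilbertBasis ι ℂ H) (c : HilbertBasis κ ℂ H)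
    {T : H →L[ℂ] H} (hT : T.IsPositive) : diagSum b T = diagSum c T := by
  obtain ⟨S, hS, hTS⟩ := CStarAlgebra.nonneg_iff_exists_isSelfAdjoint_and_eq_mul_self.1
    ((ContinuousLinearMap.nonneg_iff_isPositive T).2 hT)
  have hsym : ∀ x y : H, ⟪S x, y⟫_ℂ = ⟪x, S y⟫_ℂ := fun x y => by
    conv_lhs => rw [← hS.adjoint_eq]
    rw [ContinuousLinearMap.adjoint_inner_left]
  have key : ∀ x : H, (⟪x, T x⟫_ℂ).re = ‖S x‖ ^ 2 := fun x => by
    rw [hTS, ContinuousLinearMap.mul_apply, ← hsym, inner_self_eq_norm_sq_to_K]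
    norm_cast
  unfold diagSum
  simp only [key]
  calc ∑' i, ENNReal.ofReal (‖S (b i)‖ ^ 2)
      = ∑' i, ∑' j, ENNReal.ofReal (‖⟪c j, S (b i)⟫_ℂ‖ ^ 2) := by
        simp only [← parseval]
    _ = ∑' j, ∑' i, ENNReal.ofReal (‖⟪c j, S (b i)⟫_ℂ‖ ^ 2) := ENNReal.tsum_comm
    _ = ∑' j, ∑' i, ENNReal.ofReal (‖⟪b i, S (c j)⟫_ℂ‖ ^ 2) := by
        refine tsum_congr fun j => tsum_congr fun i => ?_
        rw [← hsym, norm_inner_symm]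
    _ = _ := by simp only [← parseval]

theorem norm_inner_pos {T : H →L[ℂ] H} (hT : T.IsPositive) (x : H) :
    ‖⟪x, T x⟫_ℂ‖ = (⟪x, T x⟫_ℂ).re := by
  obtain ⟨h1, h2⟩ := pos_inner_real hT x
  rw [h2, Complex.norm_real, Real.norm_of_nonneg h1, Complex.ofReal_re]

theorem summable_of_diagSum {ι : Type*} (b : HilbertBasis ι ℂ H)
    {T : H →L[ℂ] H} (hT : T.IsPositive) (h : diagSum b T ≠ ⊤) :
    Summable fun i => (⟪b i, T (b i)⟫_ℂ).re := by
  have := ENNReal.summable_toReal h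
  refine this.congr fun i => ?_
  rw [ENNReal.toReal_ofReal (pos_inner_real hT _).1]

theorem isTraceClass_of_diagSum {ι : Type*} (b : HilbertBasis ι ℂ H)
    {T : H →L[ℂ] H} (hT : T.IsPositive) (h : diagSum b T ≠ ⊤) : IsTraceClass T := by
  intro w c
  rw [diagSum_indep b c hT] at h
  simpa only [norm_inner_pos hT] using summable_of_diagSum c hT h

theorem diagSum_ne_top {w : Set H} (b : HilbertBasis w ℂ H)
    {T : H →L[ℂ] H} (hT : T.IsPositive) (h : IsTraceClass T) : diagSum b T ≠ ⊤ := by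
  have := h w b
  simp only [norm_inner_pos hT] at this
  exact this.tsum_ofReal_ne_top

theorem trH_eq {T : H →L[ℂ] H} (hT : T.IsPositive) :
    trH T = (((diagSum (exists_hilbertBasis ℂ H).choose_spec.choose T).toReal : ℝ) : ℂ) := by
  unfold trH diagSum
  rw [ENNReal.tsum_toReal_eq (fun i => ENNReal.ofReal_ne_top), Complex.ofReal_tsum]
  refine tsum_congr fun i => ?_
  rw [ENNReal.toReal_ofReal (pos_inner_real hT _).1]
  exact (pos_inner_real hT _).2

theorem inner_imPart (L : H →L[ℂ] H) (f : H) :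
    ⟪f, imPart L f⟫_ℂ = ((⟪f, L f⟫_ℂ).im : ℂ) := by
  unfold imPart
  rw [ContinuousLinearMap.smul_apply, inner_smul_right, ContinuousLinearMap.sub_apply,
    inner_sub_right, ContinuousLinearMap.adjoint_inner_right, ← inner_conj_symm (L f) f,
    Complex.sub_conj]
  field_simp
  push_cast
  ring

theorem im_kernel (z : ℂ) (l : ℝ) (r : ℝ) :
    ((((l : ℂ) - z)⁻¹ - (l : ℂ) * ((1 : ℂ) + (l : ℂ) ^ 2)⁻¹) * (r : ℂ)).im
      = z.im * ((Complex.normSq ((l : ℂ) - z))⁻¹ * r) := by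
  have h : (l : ℂ) * ((1 : ℂ) + (l : ℂ) ^ 2)⁻¹ = ((l * (1 + l ^ 2)⁻¹ : ℝ) : ℂ) := by push_cast; ring
  rw [h, Complex.im_mul_ofReal, Complex.sub_im, Complex.ofReal_im, Complex.inv_im]
  simp
  ring

theorem weight_le (z z₀ : ℂ) (hz : 0 < z.im) (hz₀ : 0 < z₀.im) (l : ℝ) :
    (Complex.normSq ((l : ℂ) - z))⁻¹ ≤
      (1 + ‖z - z₀‖ / z.im) ^ 2 * (Complex.normSq ((l : ℂ) - z₀))⁻¹ := by
  have h1 : z.im ≤ ‖(l : ℂ) - z‖ := by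
    have := Complex.abs_im_le_norm ((l : ℂ) - z)
    simp at this
    exact (le_abs_self _).trans this
  have h2 : z₀.im ≤ ‖(l : ℂ) - z₀‖ := by
    have := Complex.abs_im_le_norm ((l : ℂ) - z₀)
    simp at this
    exact (le_abs_self _).trans this
  have hp : 0 < ‖(l : ℂ) - z‖ := hz.trans_le h1
  have hp0 : 0 < ‖(l : ℂ) - z₀‖ := hz₀.trans_le h2
  have h3 : ‖(l : ℂ) - z₀‖ ≤ (1 + ‖z - z₀‖ / z.im) * ‖(l : ℂ) - z‖ := by
    have e : (l : ℂ) - z₀ = ((l : ℂ) - z) + (z - z₀) := by ring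
    have h4 : ‖z - z₀‖ ≤ ‖z - z₀‖ / z.im * ‖(l : ℂ) - z‖ := by
      rw [div_mul_eq_mul_div, le_div_iff₀ hz]
      exact mul_le_mul_of_nonneg_left h1 (norm_nonneg _)
    calc ‖(l : ℂ) - z₀‖ ≤ ‖(l : ℂ) - z‖ + ‖z - z₀‖ := by rw [e]; exact norm_add_le _ _
      _ ≤ _ := by linarith
  rw [Complex.normSq_eq_norm_sq, Complex.normSq_eq_norm_sq, ← div_eq_mul_inv,
    le_div_iff₀ (by positivity), inv_mul_le_iff₀ (by positivity), mul_comm, ← mul_pow]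
  exact pow_le_pow_left₀ hp0.le h3 2

end Helpers

/-- Theorem 2.8 (second part): if moreover `Im (log M(z₀))` is trace class for some
`z₀ ∈ ℂ₊`, then `Ξ(λ)` is trace class a.e. with nonnegative locally integrable trace,
`∫ (1+λ²)⁻¹ tr Ξ(λ) dλ < ∞`, and
`tr (Im (log M(z))) = Im z ∫ tr Ξ(λ) |λ-z|⁻² dλ` on `ℂ₊`. -/
theorem opLog_herglotz_representation_traceClass [SeparableSpace H]
    (M : ℂ → H →L[ℂ] H) (hM : IsHerglotz M)
    (z₀ : ℂ) (hz₀ : 0 < z₀.im) (hM₀ : IsUnit (M z₀))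
    (Ξ : ℝ → H →L[ℂ] H) (C : H →L[ℂ] H)
    (hC : IsSelfAdjoint C)
    (hΞsa : ∀ l : ℝ, IsSelfAdjoint (Ξ l))
    (hmeas : ∀ f g : H, Measurable fun l : ℝ => ⟪f, Ξ l g⟫_ℂ)
    (hbd : ∀ᵐ l ∂(volume : Measure ℝ),
      (Ξ l).IsPositive ∧ ((1 : H →L[ℂ] H) - Ξ l).IsPositive)
    (hrep : ∀ z : ℂ, 0 < z.im → ∀ f g : H,
      Integrable (fun l : ℝ =>
        (((l : ℂ) - z)⁻¹ - (l : ℂ) * ((1 : ℂ) + (l : ℂ) ^ 2)⁻¹) * ⟪f, Ξ l g⟫_ℂ) ∧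
      ⟪f, opLog (M z) g⟫_ℂ = ⟪f, C g⟫_ℂ +
        ∫ l : ℝ, (((l : ℂ) - z)⁻¹ - (l : ℂ) * ((1 : ℂ) + (l : ℂ) ^ 2)⁻¹) * ⟪f, Ξ l g⟫_ℂ)
    (htr : IsTraceClass (imPart (opLog (M z₀)))) :
    (∀ᵐ l ∂(volume : Measure ℝ),
      IsTraceClass (Ξ l) ∧ 0 ≤ (trH (Ξ l)).re ∧ (trH (Ξ l)).im = 0) ∧
    LocallyIntegrable (fun l : ℝ => (trH (Ξ l)).re) ∧
    Integrable (fun l : ℝ => ((1 : ℝ) + l ^ 2)⁻¹ * (trH (Ξ l)).re) ∧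
    ∀ z : ℂ, 0 < z.im →
      IsTraceClass (imPart (opLog (M z))) ∧
      Integrable (fun l : ℝ => trH (Ξ l) * ((Complex.normSq ((l : ℂ) - z) : ℂ))⁻¹) ∧
      trH (imPart (opLog (M z))) =
        (z.im : ℂ) * ∫ l : ℝ, trH (Ξ l) * ((Complex.normSq ((l : ℂ) - z) : ℂ))⁻¹ := by
  classical
  have hΞreal : ∀ (l : ℝ) (f : H), ⟪f, Ξ l f⟫_ℂ = ((⟪f, Ξ l f⟫_ℂ).re : ℂ) := by
    intro l f
    have h : (starRingEnd ℂ) ⟪f, Ξ l f⟫_ℂ = ⟪f, Ξ l f⟫_ℂ := by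
      rw [inner_conj_symm]
      conv_lhs => rw [← (hΞsa l).adjoint_eq]
      rw [ContinuousLinearMap.adjoint_inner_left]
    exact (Complex.conj_eq_iff_re.1 h).symm
  have hCim : ∀ f : H, (⟪f, C f⟫_ℂ).im = 0 := by
    intro f
    have h : (starRingEnd ℂ) ⟪f, C f⟫_ℂ = ⟪f, C f⟫_ℂ := by
      rw [inner_conj_symm]
      conv_lhs => rw [← hC.adjoint_eq]
      rw [ContinuousLinearMap.adjoint_inner_left]
    exact Complex.conj_eq_iff_im.1 h
  set W : ℂ → ℝ → ℝ := fun z l => (Complex.normSq ((l : ℂ) - z))⁻¹ with hW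
  have hWnn : ∀ z l, 0 ≤ W z l := fun z l => inv_nonneg.2 (Complex.normSq_nonneg _)
  have hWm : ∀ z, Measurable (W z) := fun z => by
    apply Measurable.inv
    exact (Complex.continuous_normSq.comp
      (Complex.continuous_ofReal.sub continuous_const)).measurable
  have hWpos : ∀ z : ℂ, 0 < z.im → ∀ l, 0 < W z l := fun z hz l => by
    apply inv_pos.2
    rw [Complex.normSq_pos]
    intro h
    have := congrArg Complex.im h
    simp at this
    exact hz.ne' this
  have hform : ∀ z : ℂ, 0 < z.im → ∀ f : H,
      Integrable (fun l : ℝ => W z l * (⟪f, Ξ l f⟫_ℂ).re) ∧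
      (⟪f, opLog (M z) f⟫_ℂ).im = z.im * ∫ l : ℝ, W z l * (⟪f, Ξ l f⟫_ℂ).re := by
    intro z hz f
    obtain ⟨hi, he⟩ := hrep z hz f f
    have hker : ∀ l : ℝ, ((((l : ℂ) - z)⁻¹ - (l : ℂ) * ((1 : ℂ) + (l : ℂ) ^ 2)⁻¹) *
        ⟪f, Ξ l f⟫_ℂ).im = z.im * (W z l * (⟪f, Ξ l f⟫_ℂ).re) := by
      intro l
      rw [hΞreal l f, im_kernel, Complex.ofReal_re]
    have hi2 : Integrable (fun l : ℝ => z.im * (W z l * (⟪f, Ξ l f⟫_ℂ).re)) :=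
      hi.im.congr (Eventually.of_forall hker)
    constructor
    · have := hi2.const_mul (z.im)⁻¹
      refine this.congr (Eventually.of_forall fun l => ?_)
      simp only
      rw [inv_mul_cancel_left₀ hz.ne']
    · rw [he, Complex.add_im, hCim, zero_add, ← integral_const_mul]
      have := integral_im hi
      simp only [RCLike.im_to_complex] at this
      rw [← this]
      exact integral_congr_ae (Eventually.of_forall hker)
  have hPos : ∀ z : ℂ, 0 < z.im → (imPart (opLog (M z))).IsPositive := by
    intro z hz
    rw [ContinuousLinearMap.isPositive_iff_complex]
    intro x
    have h0 : 0 ≤ (⟪x, opLog (M z) x⟫_ℂ).im := by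
      rw [(hform z hz x).2]
      apply mul_nonneg hz.le
      apply integral_nonneg_of_ae
      filter_upwards [hbd] with l hl
      exact mul_nonneg (hWnn z l) (pos_inner_real hl.1 x).1
    rw [← inner_conj_symm, inner_imPart, Complex.conj_ofReal]
    simpa using h0
  set b := (exists_hilbertBasis ℂ H).choose_spec.choose with hb
  haveI : Countable (exists_hilbertBasis ℂ H).choose := hb_countable b
  set T : ℝ → ENNReal := fun l => diagSum b (Ξ l) with hTdef
  have hTm : Measurable T := by
    refine Measurable.ennreal_tsum fun i => ?_
    exact (Complex.measurable_re.comp (hmeas (b i) (b i))).ennreal_ofReal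
  have hWT : ∀ z : ℂ, Measurable (fun l => ENNReal.ofReal (W z l) * T l) :=
    fun z => (hWm z).ennreal_ofReal.mul hTm
  have hlint : ∀ z : ℂ, 0 < z.im →
      diagSum b (imPart (opLog (M z))) =
        ENNReal.ofReal z.im * ∫⁻ l, ENNReal.ofReal (W z l) * T l := by
    intro z hz
    have e1 : ∀ l, ENNReal.ofReal (W z l) * T l =
        ∑' i, ENNReal.ofReal (W z l * (⟪b i, Ξ l (b i)⟫_ℂ).re) := by
      intro l
      simp only [hTdef, diagSum]
      rw [← ENNReal.tsum_mul_left]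
      exact tsum_congr fun i => (ENNReal.ofReal_mul (hWnn z l)).symm
    simp only [e1]
    rw [lintegral_tsum, ← ENNReal.tsum_mul_left]
    · unfold diagSum
      refine tsum_congr fun i => ?_
      rw [inner_imPart, Complex.ofReal_re, (hform z hz _).2, ENNReal.ofReal_mul hz.le,
        ofReal_integral_eq_lintegral_ofReal (hform z hz _).1]
      filter_upwards [hbd] with l hl
      exact mul_nonneg (hWnn z l) (pos_inner_real hl.1 _).1
    · intro i
      exact ((hWm z).mul (Complex.measurable_re.comp
        (hmeas (b i) (b i)))).ennreal_ofReal.aemeasurable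
  have hfin0 : ∫⁻ l, ENNReal.ofReal (W z₀ l) * T l ≠ ⊤ := by
    have h := diagSum_ne_top b (hPos z₀ hz₀) htr
    rw [hlint z₀ hz₀] at h
    intro h'
    rw [h', ENNReal.mul_top (by simpa using hz₀)] at h
    exact h rfl
  have hfin : ∀ z : ℂ, 0 < z.im → ∫⁻ l, ENNReal.ofReal (W z l) * T l ≠ ⊤ := by
    intro z hz
    refine ne_top_of_le_ne_top (ENNReal.mul_ne_top
      (ENNReal.ofReal_ne_top (r := (1 + ‖z - z₀‖ / z.im) ^ 2)) hfin0) ?_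
    rw [← lintegral_const_mul _ (hWT z₀)]
    refine lintegral_mono fun l => ?_
    rw [← mul_assoc, ← ENNReal.ofReal_mul (by positivity)]
    gcongr
    exact weight_le z z₀ hz hz₀ l
  have hTfin : ∀ᵐ l ∂(volume : Measure ℝ), T l ≠ ⊤ := by
    filter_upwards [ae_lt_top (hWT z₀) hfin0] with l hl h
    rw [h, ENNReal.mul_top (by simpa using hWpos z₀ hz₀ l)] at hl
    exact lt_irrefl _ hl
  have htrΞ : ∀ᵐ l ∂(volume : Measure ℝ), trH (Ξ l) = ((T l).toReal : ℂ) := by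
    filter_upwards [hbd] with l hl
    exact trH_eq hl.1
  have hint : ∀ z : ℂ, 0 < z.im → Integrable (fun l => W z l * (T l).toReal) := by
    intro z hz
    refine (integrable_toReal_of_lintegral_ne_top
      (hWT z).aemeasurable (hfin z hz)).congr
      (Eventually.of_forall fun l => ?_)
    simp [ENNReal.toReal_mul, ENNReal.toReal_ofReal (hWnn z l)]
  have hintI : Integrable (fun l : ℝ => ((1 : ℝ) + l ^ 2)⁻¹ * (T l).toReal) := by
    refine (hint Complex.I (by simp)).congr (Eventually.of_forall fun l => ?_)
    simp [hW, Complex.normSq_apply]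
    left; ring
  refine ⟨?_, ?_, ?_, ?_⟩
  · filter_upwards [hbd, hTfin, htrΞ] with l h1 h2 h3
    refine ⟨isTraceClass_of_diagSum b h1.1 h2, ?_, ?_⟩
    · rw [h3, Complex.ofReal_re]; exact ENNReal.toReal_nonneg
    · rw [h3, Complex.ofReal_im]
  · have h := (hintI.locallyIntegrable).continuous_mul (g := fun l : ℝ => 1 + l ^ 2) (by fun_prop)
    refine h.congr ?_
    filter_upwards [htrΞ] with l h3
    rw [h3, Complex.ofReal_re, mul_inv_cancel_left₀ (by positivity)]
  · refine hintI.congr ?_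
    filter_upwards [htrΞ] with l h3
    rw [h3, Complex.ofReal_re]
  · intro z hz
    have hae : (fun l : ℝ => ((W z l * (T l).toReal : ℝ) : ℂ)) =ᵐ[volume]
        fun l : ℝ => trH (Ξ l) * ((Complex.normSq ((l : ℂ) - z) : ℂ))⁻¹ := by
      filter_upwards [htrΞ] with l h3
      rw [h3]
      simp only [hW]
      push_cast
      ring
    have hd : diagSum b (imPart (opLog (M z))) ≠ ⊤ := by
      rw [hlint z hz]
      exact ENNReal.mul_ne_top ENNReal.ofReal_ne_top (hfin z hz)
    refine ⟨isTraceClass_of_diagSum b (hPos z hz) hd, (hint z hz).ofReal.congr hae, ?_⟩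
    rw [trH_eq (hPos z hz), ← hb, hlint z hz, ← integral_congr_ae hae, integral_complex_ofReal,
      ENNReal.toReal_mul, ENNReal.toReal_ofReal hz.le, Complex.ofReal_mul]
    congr 2
    rw [← integral_toReal (hWT z).aemeasurable
      (ae_lt_top (hWT z) (hfin z hz))]
    refine integral_congr_ae (Eventually.of_forall fun l => ?_)
    simp [ENNReal.toReal_mul, ENNReal.toReal_ofReal (hWnn z l)]

end SpectralShift
end
end
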